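/- arXiv:2009.01580 — 2 statements merged into one kernel-verified Lean document; each statement's English description precedes it below -/
import Mathlib

section
/- Let σ be an admissible set for G_{n,2} whose admissible polytope P_σ has affine dimension n−1, and let I, J ⊆ {1,…,n} be subsets with I ∩ J ≠ ∅. If every point x ∈ P_σ satisfies ∑_{i∈I} x_i ≤ 1 and ∑_{j∈J} x_j ≤ 1, then every point x ∈ P_σ also satisfies ∑_{s∈I∪J} x_s ≤ 1. -/
/-- The Plücker coordinate `P^{ij}(A) = A_{i1}A_{j2} − A_{j1}A_{i2}` of an
n×2 complex matrix. -/
def plucker {n : ℕ} (A : Matrix (Fin n) (Fin 2) ℂ) (i j : Fin n) : ℂ :=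
  A i 0 * A j 1 - A j 0 * A i 1

/-- The Plücker support `σ(A) = {{i,j} : P^{ij}(A) ≠ 0}` of an n×2 matrix. -/
def pluckerSupport {n : ℕ} (A : Matrix (Fin n) (Fin 2) ℂ) : Set (Finset (Fin n)) :=
  {p | ∃ i j : Fin n, i ≠ j ∧ p = {i, j} ∧ plucker A i j ≠ 0}

/-- A set `σ` of 2-element subsets of `{1,…,n}` is admissible for `G_{n,2}`
if it is the Plücker support of some rank-2 complex n×2 matrix. -/
def IsAdmissible {n : ℕ} (σ : Set (Finset (Fin n))) : Prop :=
  ∃ A : Matrix (Fin n) (Fin 2) ℂ, A.rank = 2 ∧ pluckerSupport A = σ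

/-- The 0/1 vertex `Λ_p = ∑_{i∈p} e_i` of the hypersimplex associated with a
subset `p` of indices. -/
def vertexOf {n : ℕ} (p : Finset (Fin n)) : Fin n → ℝ :=
  fun i => if i ∈ p then 1 else 0

/-- The admissible polytope `P_σ = conv{e_i + e_j : {i,j} ∈ σ}`. -/
def admPolytope {n : ℕ} (σ : Set (Finset (Fin n))) : Set (Fin n → ℝ) :=
  convexHull ℝ (vertexOf '' σ)

/-!
The Plücker coordinate `P^{ij}(A)` vanishes exactly when the rows `i` and `j` of `A` are linearly
dependent, so `∑_{i ∈ I} x_i ≤ 1` holds on the polytope of `σ(A)` if and only if any two rows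
indexed by `I` are linearly dependent. A polytope of dimension `n - 1` already spans the hyperplane
`∑ x_i = 2` and cannot also lie in `x_k = 0`, so no row of `A` vanishes. Two rows that are multiples
of a common nonzero row are dependent, hence the condition passes from `I` and `J` to `I ∪ J`
through any `k ∈ I ∩ J`.
-/

section Dimension

open Module

theorem finrank_vectorSpan_add_finrank_le {K V W : Type*} [DivisionRing K] [AddCommGroup V]
    [Module K V] [FiniteDimensional K V] [AddCommGroup W] [Module K W] {f : V →ₗ[K] W}
    (hf : Function.Surjective f) {S : Set V} (hS : ∀ x ∈ S, ∀ y ∈ S, f x = f y) :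
    finrank K (vectorSpan K S) + finrank K W ≤ finrank K V := by
  have hker : vectorSpan K S ≤ LinearMap.ker f := by
    rw [vectorSpan_def, Submodule.span_le]
    rintro _ ⟨x, hx, y, hy, rfl⟩
    simp [hS x hx y hy]
  calc finrank K (vectorSpan K S) + finrank K W
      ≤ finrank K (LinearMap.ker f) + finrank K W := by gcongr; exact Submodule.finrank_mono hker
    _ = finrank K V := by
      rw [← f.finrank_range_add_finrank_ker, LinearMap.range_eq_top.2 hf, finrank_top, add_comm]

theorem finrank_vectorSpan_add_two_le {K ι : Type*} [DivisionRing K] [Fintype ι] [Nontrivial ι]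
    {S : Set (ι → K)} {a b : K} (k : ι) (hsum : ∀ x ∈ S, ∑ i, x i = a) (hk : ∀ x ∈ S, x k = b) :
    finrank K (vectorSpan K S) + 2 ≤ Fintype.card ι := by
  classical
  let f : (ι → K) →ₗ[K] K × K := (∑ i, LinearMap.proj i).prod (LinearMap.proj k)
  have f_apply (x : ι → K) : f x = (∑ i, x i, x k) := by simp [f]
  have hf : Function.Surjective f := by
    rintro ⟨c, d⟩
    obtain ⟨l, hl⟩ := exists_ne k
    exact ⟨Pi.single k d + Pi.single l (c - d), by simp [f_apply, Finset.sum_add_distrib, hl.symm]⟩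
  have hS : ∀ x ∈ S, ∀ y ∈ S, f x = f y := fun x hx y hy => by
    simp only [f_apply, hsum x hx, hsum y hy, hk x hx, hk y hy]
  simpa using finrank_vectorSpan_add_finrank_le hf hS

end Dimension

section Polytope

variable {n : ℕ} {σ : Set (Finset (Fin n))}

theorem sum_vertexOf (I p : Finset (Fin n)) : ∑ i ∈ I, vertexOf p i = (I ∩ p).card := by
  simp [vertexOf]

theorem forall_mem_admPolytope_sum_le_iff {I : Finset (Fin n)} {m : ℕ} :
    (∀ x ∈ admPolytope σ, ∑ i ∈ I, x i ≤ m) ↔ ∀ p ∈ σ, (I ∩ p).card ≤ m := by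
  have hconvex : Convex ℝ {x : Fin n → ℝ | ∑ i ∈ I, x i ≤ m} := by
    simpa using convex_halfSpace_le (∑ i ∈ I, LinearMap.proj (φ := fun _ => ℝ) i).isLinear (m : ℝ)
  calc (∀ x ∈ admPolytope σ, ∑ i ∈ I, x i ≤ m)
      ↔ ∀ x ∈ vertexOf '' σ, ∑ i ∈ I, x i ≤ m := hconvex.convexHull_subset_iff
    _ ↔ ∀ p ∈ σ, (I ∩ p).card ≤ m := by
      simp only [Set.forall_mem_image, sum_vertexOf, Nat.cast_le]

theorem direction_affineSpan_admPolytope :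
    (affineSpan ℝ (admPolytope σ)).direction = vectorSpan ℝ (vertexOf '' σ) := by
  rw [admPolytope, affineSpan_convexHull, direction_affineSpan]

end Polytope

section Plucker

variable {n : ℕ} {A : Matrix (Fin n) (Fin 2) ℂ} {i j k : Fin n} {p I J : Finset (Fin n)}

theorem plucker_self (A : Matrix (Fin n) (Fin 2) ℂ) (i : Fin n) : plucker A i i = 0 :=
  sub_self _

theorem plucker_eq_zero_of_row_ne_zero (hk : A k ≠ 0) (hi : plucker A i k = 0)
    (hj : plucker A j k = 0) : plucker A i j = 0 := by
  obtain ⟨c, hc⟩ := Function.ne_iff.1 hk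
  have hrel : A k c * plucker A i j = A j c * plucker A i k - A i c * plucker A j k := by
    fin_cases c <;> simp only [plucker, Fin.zero_eta, Fin.mk_one] <;> ring
  have hzero : A k c * plucker A i j = 0 := by rw [hrel, hi, hj, mul_zero, mul_zero, sub_zero]
  exact (mul_eq_zero.1 hzero).resolve_left hc

theorem card_of_mem_pluckerSupport (hp : p ∈ pluckerSupport A) : p.card = 2 := by
  obtain ⟨i, j, hij, rfl, -⟩ := hp
  exact Finset.card_pair hij

theorem row_ne_zero_of_mem_pluckerSupport (hp : p ∈ pluckerSupport A) (hk : k ∈ p) : A k ≠ 0 := by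
  obtain ⟨i, j, -, rfl, hne⟩ := hp
  intro hzero
  have hkij : k = i ∨ k = j := by simpa using hk
  rcases hkij with rfl | rfl <;> exact hne (by simp [plucker, hzero])

/-- The rows of `A` indexed by `I` are pairwise linearly dependent (zero rows are allowed). For the
polytope of `σ(A)` this characterizes the validity of `∑_{i ∈ I} x_i ≤ 1`. -/
def IsParallel (A : Matrix (Fin n) (Fin 2) ℂ) (I : Finset (Fin n)) : Prop :=
  ∀ i ∈ I, ∀ j ∈ I, plucker A i j = 0

theorem IsParallel.union (hI : IsParallel A I) (hJ : IsParallel A J) (hkI : k ∈ I) (hkJ : k ∈ J)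
    (hk : A k ≠ 0) : IsParallel A (I ∪ J) := by
  have hparallel : ∀ i ∈ I ∪ J, plucker A i k = 0 := fun i hi =>
    (Finset.mem_union.1 hi).elim (hI i · k hkI) (hJ i · k hkJ)
  exact fun i hi j hj => plucker_eq_zero_of_row_ne_zero hk (hparallel i hi) (hparallel j hj)

theorem isParallel_iff_forall_mem_pluckerSupport_not_subset :
    IsParallel A I ↔ ∀ p ∈ pluckerSupport A, ¬p ⊆ I := by
  constructor
  · rintro hI _ ⟨i, j, -, rfl, hne⟩ hsub
    exact hne (hI i (hsub (by simp)) j (hsub (by simp)))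
  · intro h i hi j hj
    by_contra hne
    have hij : i ≠ j := by
      rintro rfl
      exact hne (plucker_self A i)
    exact h {i, j} ⟨i, j, hij, rfl, hne⟩ (by simp [Finset.insert_subset_iff, hi, hj])

theorem forall_mem_admPolytope_sum_le_one_iff_isParallel :
    (∀ x ∈ admPolytope (pluckerSupport A), ∑ i ∈ I, x i ≤ 1) ↔ IsParallel A I := by
  rw [isParallel_iff_forall_mem_pluckerSupport_not_subset, ← Nat.cast_one,
    forall_mem_admPolytope_sum_le_iff]
  refine forall₂_congr fun p hp => ?_
  have hcard := card_of_mem_pluckerSupport hp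
  have hsub : p ⊆ I ↔ 2 ≤ (I ∩ p).card := by
    rw [← hcard, ← Finset.inter_eq_right]
    exact ⟨fun h => by rw [h], Finset.eq_of_subset_of_card_le Finset.inter_subset_right⟩
  rw [hsub]
  omega

end Plucker

section Admissible

variable {n : ℕ} {σ : Set (Finset (Fin n))}

theorem IsAdmissible.two_le (hσ : IsAdmissible σ) : 2 ≤ n := by
  obtain ⟨A, hA, -⟩ := hσ
  exact hA ▸ A.rank_le_height

theorem IsAdmissible.card_eq_two (hσ : IsAdmissible σ) {p : Finset (Fin n)} (hp : p ∈ σ) :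
    p.card = 2 := by
  obtain ⟨A, -, rfl⟩ := hσ
  exact card_of_mem_pluckerSupport hp

theorem IsAdmissible.exists_mem_of_le_finrank (hσ : IsAdmissible σ)
    (hdim : n - 1 ≤ Module.finrank ℝ (affineSpan ℝ (admPolytope σ)).direction) (k : Fin n) :
    ∃ p ∈ σ, k ∈ p := by
  have hn : 2 ≤ n := hσ.two_le
  have : Nontrivial (Fin n) := Fin.nontrivial_iff_two_le.2 hn
  by_contra! hk
  have hsum : ∀ x ∈ vertexOf '' σ, ∑ i, x i = 2 := by
    rintro _ ⟨p, hp, rfl⟩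
    simp [sum_vertexOf, hσ.card_eq_two hp]
  have hzero : ∀ x ∈ vertexOf '' σ, x k = 0 := by
    rintro _ ⟨p, hp, rfl⟩
    exact if_neg (hk p hp)
  have hle := finrank_vectorSpan_add_two_le k hsum hzero
  rw [← direction_affineSpan_admPolytope, Fintype.card_fin] at hle
  omega

end Admissible

theorem stmt10_general {n : ℕ} {σ : Set (Finset (Fin n))} (hσ : IsAdmissible σ)
    {I J : Finset (Fin n)} (hIJ : ∃ k ∈ I ∩ J, ∃ p ∈ σ, k ∈ p)
    (hle : ∀ x ∈ admPolytope σ, (∑ i ∈ I, x i ≤ 1) ∧ (∑ j ∈ J, x j ≤ 1)) :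
    ∀ x ∈ admPolytope σ, ∑ s ∈ I ∪ J, x s ≤ 1 := by
  obtain ⟨A, -, rfl⟩ := hσ
  obtain ⟨k, hk, p, hp, hkp⟩ := hIJ
  obtain ⟨hkI, hkJ⟩ := Finset.mem_inter.1 hk
  have hI : IsParallel A I :=
    forall_mem_admPolytope_sum_le_one_iff_isParallel.1 fun x hx => (hle x hx).1
  have hJ : IsParallel A J :=
    forall_mem_admPolytope_sum_le_one_iff_isParallel.1 fun x hx => (hle x hx).2
  exact forall_mem_admPolytope_sum_le_one_iff_isParallel.2
    (hI.union hJ hkI hkJ (row_ne_zero_of_mem_pluckerSupport hp hkp))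

/-- if P_σ is an admissible polytope of affine dimension n−1 on
which both ∑_{i∈I} x_i ≤ 1 and ∑_{j∈J} x_j ≤ 1 hold, with I ∩ J ≠ ∅, then
∑_{s∈I∪J} x_s ≤ 1 also holds on P_σ. -/
theorem stmt10 (n : ℕ) (σ : Set (Finset (Fin n))) (hσ : IsAdmissible σ)
    (hdim : Module.finrank ℝ (affineSpan ℝ (admPolytope σ)).direction = n - 1)
    (I J : Finset (Fin n)) (hIJ : (I ∩ J).Nonempty)
    (hle : ∀ x ∈ admPolytope σ, (∑ i ∈ I, x i ≤ 1) ∧ (∑ j ∈ J, x j ≤ 1)) :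
    ∀ x ∈ admPolytope σ, ∑ s ∈ I ∪ J, x s ≤ 1 := by
  obtain ⟨k, hk⟩ := hIJ
  exact stmt10_general hσ ⟨k, hk, hσ.exists_mem_of_le_finrank hdim.ge k⟩ hle
end

section
/- Let n ≥ 4 and let x and y be points of the interior of Δ_{n,2} (i.e., ∑ x_i = ∑ y_i = 2 and all coordinates of x and y lie strictly between 0 and 1). Then x and y belong to the relative interiors of exactly the same admissible polytopes of G_{n,2} if and only if for every subset S ⊆ {1,…,n} with 2 ≤ |S| ≤ n−2 one has: ∑_{i∈S} x_i < 1 ⟺ ∑_{i∈S} y_i < 1, and ∑_{i∈S} x_i = 1 ⟺ ∑_{i∈S} y_i = 1. (Equivalently, the chamber decomposition of the interior of Δ_{n,2} determined by intersecting the relative interiors of all admissible polytopes coincides with the decomposition induced by the hyperplane arrangement {∑_{i∈S} x_i = 1 : 2 ≤ |S| ≤ n−2}.) -/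
/-- The hypersimplex `Δ_{n,k} ⊂ ℝ^n`. -/
def hypersimplex (n k : ℕ) : Set (Fin n → ℝ) :=
  {x | (∀ i, 0 ≤ x i ∧ x i ≤ 1) ∧ ∑ i, x i = (k : ℝ)}

/-!
A point of a polyhedron lies in its relative interior exactly when every inequality tight at that
point is tight on the whole polyhedron. If an admissible polytope contains an interior point of the
hypersimplex, its matrix `A` has no zero row, so `P^{ij}(A) = 0` says that the rows `i` and `j` are
parallel: the Plücker support is a complete multipartite graph. The polytope of such a graph is cut
out of `∑ u = 2` by `u ≥ 0` and `∑ i ∈ T, u i ≤ 1` for each part `T`, so whether `x` lies in its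
relative interior depends only on the signs of `∑ i ∈ T, x i - 1`. Conversely, `∑ i ∈ S, x i = 1`
is detected by the complete bipartite graph with sides `S` and `Sᶜ`, and `∑ i ∈ S, x i < 1` by the
complete multipartite graph whose parts are `S` and the singletons outside `S`.
-/

open Filter Finset Topology

section IntrinsicInterior

section

variable {𝕜 V P : Type*} [Ring 𝕜] [AddCommGroup V] [Module 𝕜 V] [TopologicalSpace P]
  [AddTorsor V P] {s : Set P} {x : P}

theorem mem_intrinsicInterior_iff_mem_nhdsWithin :
    x ∈ intrinsicInterior 𝕜 s ↔
      x ∈ affineSpan 𝕜 s ∧ s ∈ 𝓝[(affineSpan 𝕜 s : Set P)] x := by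
  simp only [mem_intrinsicInterior, mem_interior_iff_mem_nhds]
  constructor
  · rintro ⟨y, hy, rfl⟩
    exact ⟨y.2, preimage_coe_mem_nhds_subtype.1 hy⟩
  · rintro ⟨hx, hs⟩
    exact ⟨⟨x, hx⟩, preimage_coe_mem_nhds_subtype.2 hs, rfl⟩

end

section

variable {V : Type*} [AddCommGroup V] [Module ℝ V] [TopologicalSpace V] [IsTopologicalAddGroup V]
  [ContinuousSMul ℝ V] {s : Set V} {u w x z : V}

theorem exists_one_lt_lineMap_mem_of_mem_intrinsicInterior (hx : x ∈ intrinsicInterior ℝ s)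
    (hz : z ∈ s) : ∃ t : ℝ, 1 < t ∧ AffineMap.lineMap z x t ∈ s := by
  obtain ⟨hx, hs⟩ := mem_intrinsicInterior_iff_mem_nhdsWithin.1 hx
  have hlim : Tendsto (AffineMap.lineMap z x : ℝ → V) (𝓝[>] 1)
      (𝓝[(affineSpan ℝ s : Set V)] x) := by
    refine tendsto_nhdsWithin_iff.2 ⟨?_, .of_forall fun t ↦
      AffineMap.lineMap_mem t (subset_affineSpan ℝ s hz) hx⟩
    have hcont : Continuous (AffineMap.lineMap z x : ℝ → V) := AffineMap.lineMap_continuous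
    exact (hcont.tendsto' 1 x (AffineMap.lineMap_apply_one z x)).mono_left nhdsWithin_le_nhds
  obtain ⟨t, hts, ht⟩ := ((hlim.eventually hs).and self_mem_nhdsWithin).exists
  exact ⟨t, ht, hts⟩

theorem lineMap_mem_intrinsicInterior (hs : Convex ℝ s) (hu : u ∈ s)
    (hw : w ∈ intrinsicInterior ℝ s) {c : ℝ} (hc₀ : 0 < c) (hc₁ : c ≤ 1) :
    AffineMap.lineMap u w c ∈ intrinsicInterior ℝ s := by
  obtain ⟨hw, hsw⟩ := mem_intrinsicInterior_iff_mem_nhdsWithin.1 hw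
  have hu' := subset_affineSpan ℝ s hu
  refine mem_intrinsicInterior_iff_mem_nhdsWithin.2 ⟨AffineMap.lineMap_mem c hu' hw, ?_⟩
  -- The dilation about `u` with ratio `c⁻¹` sends points near `lineMap u w c` to points near `w`.
  have hlim : Tendsto (fun z ↦ AffineMap.lineMap u z c⁻¹)
      (𝓝[(affineSpan ℝ s : Set V)] (AffineMap.lineMap u w c))
      (𝓝[(affineSpan ℝ s : Set V)] w) := by
    refine tendsto_nhdsWithin_iff.2 ⟨?_, eventually_mem_nhdsWithin.mono fun z hz ↦
      AffineMap.lineMap_mem c⁻¹ hu' hz⟩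
    have hcont : Continuous fun z : V ↦ AffineMap.lineMap u z c⁻¹ := by
      simp only [AffineMap.lineMap_apply_module']
      fun_prop
    exact (hcont.tendsto' _ _ (by simp [AffineMap.lineMap_apply, hc₀.ne'])).mono_left
      nhdsWithin_le_nhds
  filter_upwards [hlim.eventually hsw] with z hz
  simpa [AffineMap.lineMap_apply, hc₀.ne'] using hs.lineMap_mem hu hz ⟨hc₀.le, hc₁⟩

end

variable {V : Type*} [NormedAddCommGroup V] [NormedSpace ℝ V] [FiniteDimensional ℝ V]

theorem mem_intrinsicInterior_iff_forall_exists_lineMap_mem {s : Set V} (hs : Convex ℝ s) {x : V} :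
    x ∈ intrinsicInterior ℝ s ↔
      x ∈ s ∧ ∀ z ∈ s, ∃ t : ℝ, 1 < t ∧ AffineMap.lineMap z x t ∈ s := by
  refine ⟨fun hx ↦ ⟨intrinsicInterior_subset hx, fun z hz ↦
    exists_one_lt_lineMap_mem_of_mem_intrinsicInterior hx hz⟩, fun ⟨hx, hext⟩ ↦ ?_⟩
  obtain ⟨w, hw⟩ := Set.Nonempty.intrinsicInterior hs ⟨x, hx⟩
  obtain ⟨t, ht, hts⟩ := hext w (intrinsicInterior_subset hw)
  have ht₀ : 0 < t := by linarith
  have hx_eq : AffineMap.lineMap (AffineMap.lineMap w x t) w (1 - t⁻¹) = x := by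
    rw [AffineMap.lineMap_apply_one_sub]
    simp [AffineMap.lineMap_apply, ht₀.ne']
  rw [← hx_eq]
  exact lineMap_mem_intrinsicInterior hs hts hw (sub_pos.2 (inv_lt_one_of_one_lt₀ ht))
    (sub_le_self 1 (inv_nonneg.2 ht₀.le))

end IntrinsicInterior

section Polyhedron

variable {V W ι : Type*} [AddCommGroup W] [Module ℝ W]

/-- The polyhedron `{u | L u = c, f i u ≤ b i for all i}`. The equations are kept apart from the
inequalities so that its relative interior can be described by the inequalities alone. -/
def polyhedron [AddCommGroup V] [Module ℝ V] (L : V →ₗ[ℝ] W) (c : W) (f : ι → V →ₗ[ℝ] ℝ)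
    (b : ι → ℝ) : Set V :=
  {u | L u = c ∧ ∀ i, f i u ≤ b i}

theorem convex_polyhedron [AddCommGroup V] [Module ℝ V] (L : V →ₗ[ℝ] W) (c : W)
    (f : ι → V →ₗ[ℝ] ℝ) (b : ι → ℝ) : Convex ℝ (polyhedron L c f b) := by
  have hinter : polyhedron L c f b = L ⁻¹' {c} ∩ ⋂ i, f i ⁻¹' Set.Iic (b i) := by
    ext; simp [polyhedron]
  rw [hinter]
  exact ((convex_singleton c).linear_preimage L).inter
    (convex_iInter fun i ↦ (convex_Iic (b i)).linear_preimage (f i))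

theorem mem_intrinsicInterior_polyhedron [NormedAddCommGroup V] [NormedSpace ℝ V]
    [FiniteDimensional ℝ V] [Finite ι] {L : V →ₗ[ℝ] W} {c : W} {f : ι → V →ₗ[ℝ] ℝ} {b : ι → ℝ}
    {x : V} :
    x ∈ intrinsicInterior ℝ (polyhedron L c f b) ↔
      x ∈ polyhedron L c f b ∧ ∀ i, f i x = b i → ∀ z ∈ polyhedron L c f b, f i z = b i := by
  rw [mem_intrinsicInterior_iff_forall_exists_lineMap_mem (convex_polyhedron L c f b)]
  refine and_congr_right fun hx ↦ ⟨fun hext i hi z hz ↦ ?_, fun htight z hz ↦ ?_⟩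
  · obtain ⟨t, ht, -, hle⟩ := hext z hz
    have hbound : (1 - t) * f i z + t * b i ≤ b i := by
      simpa [AffineMap.lineMap_apply_module, hi] using hle i
    exact (hz.2 i).antisymm (by nlinarith)
  · have hineq (i : ι) : ∀ᶠ t : ℝ in 𝓝[>] 1, f i (AffineMap.lineMap z x t) ≤ b i := by
      rcases (hx.2 i).eq_or_lt with hi | hi
      · exact .of_forall fun t ↦ by simp [AffineMap.lineMap_apply, htight i hi z hz, hi]
      · have hcont : Continuous fun t : ℝ ↦ f i (AffineMap.lineMap z x t) :=
          (f i).continuous_of_finiteDimensional.comp AffineMap.lineMap_continuous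
        have hlt : ∀ᶠ t in 𝓝 (1 : ℝ), f i (AffineMap.lineMap z x t) < b i :=
          hcont.tendsto 1 |>.eventually_lt_const (by simpa using hi)
        exact (hlt.filter_mono nhdsWithin_le_nhds).mono fun t ht ↦ ht.le
    obtain ⟨t, hle, ht⟩ := ((eventually_all.2 hineq).and self_mem_nhdsWithin).exists
    exact ⟨t, ht, by simp [AffineMap.lineMap_apply, hz.1, hx.1], hle⟩

end Polyhedron

section EdgePolytope

variable {V : Type*} {G : SimpleGraph V}

theorem isCompleteMultipartite_comap_top {β : Type*} (f : V → β) :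
    ((⊤ : SimpleGraph β).comap f).IsCompleteMultipartite :=
  ⟨fun i j k hij hjk ↦ by simp_all⟩

section

variable [DecidableEq V]

/-- The edge polytope of `G`, the convex hull of the points `e_i + e_j` over the edges `ij`. -/
def edgePolytope (G : SimpleGraph V) : Set (V → ℝ) :=
  convexHull ℝ ((fun p : V × V ↦ Pi.single p.1 1 + Pi.single p.2 1) '' {p | G.Adj p.1 p.2})

theorem single_add_single_mem_edgePolytope {i j : V} (hij : G.Adj i j) :
    Pi.single i 1 + Pi.single j 1 ∈ edgePolytope G :=
  subset_convexHull ℝ _ ⟨(i, j), hij, rfl⟩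

theorem edgePolytope_subset {K : Set (V → ℝ)} (hK : Convex ℝ K)
    (h : ∀ i j, G.Adj i j → Pi.single i 1 + Pi.single j 1 ∈ K) : edgePolytope G ⊆ K :=
  convexHull_min (Set.image_subset_iff.2 fun p hp ↦ h p.1 p.2 hp) hK

theorem sum_single_add_single (T : Finset V) (i j : V) :
    ∑ k ∈ T, (Pi.single i 1 + Pi.single j 1 : V → ℝ) k =
      (if i ∈ T then 1 else 0) + if j ∈ T then 1 else 0 := by
  simp [sum_add_distrib]

theorem exists_adj_of_mem_edgePolytope {u : V → ℝ} (hu : u ∈ edgePolytope G) {i : V}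
    (hi : u i ≠ 0) : ∃ j, G.Adj i j := by
  by_contra! hisolated
  have hK : Convex ℝ {v : V → ℝ | v i = 0} :=
    convex_hyperplane (LinearMap.proj (R := ℝ) (φ := fun _ : V ↦ ℝ) i).isLinear 0
  refine hi (edgePolytope_subset hK (fun j k hjk ↦ ?_) hu)
  have hij : i ≠ j := by rintro rfl; exact hisolated k hjk
  have hik : i ≠ k := by rintro rfl; exact hisolated j hjk.symm
  simp [hij, hik]

end

variable [Fintype V]

open Classical in
/-- The vertices not adjacent to `i`, including `i` itself. When `G` is complete multipartite this
is the part containing `i`. -/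
noncomputable def part (G : SimpleGraph V) (i : V) : Finset V :=
  {j | ¬ G.Adj i j}

@[simp]
theorem mem_part {i j : V} : j ∈ part G i ↔ ¬ G.Adj i j := by
  simp [part]

theorem sum_mul_le_of_forall_adj {u : V → ℝ} (hu₀ : ∀ i, 0 ≤ u i) (hsum : ∑ i, u i = 2)
    (hpart : ∀ i, ∑ j ∈ part G i, u j ≤ 1) {g : V → ℝ} {b : ℝ}
    (hg : ∀ i j, G.Adj i j → g i + g j ≤ b) : ∑ k, g k * u k ≤ b := by
  classical
  have hne : (univ : Finset V).Nonempty := nonempty_of_sum_ne_zero (f := u) (by simp [hsum])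
  obtain ⟨m, -, hm⟩ := exists_max_image univ g hne
  rcases le_or_gt (2 * g m) b with hle | hlt
  · calc ∑ k, g k * u k ≤ ∑ k, b / 2 * u k := sum_le_sum fun k _ ↦
          mul_le_mul_of_nonneg_right (by linarith [hm k (mem_univ k)]) (hu₀ k)
      _ = b := by rw [← mul_sum, hsum]; ring
  · have hin : ∑ k ∈ part G m, g k * u k ≤ g m * ∑ k ∈ part G m, u k := by
      rw [mul_sum]
      exact sum_le_sum fun k _ ↦ mul_le_mul_of_nonneg_right (hm k (mem_univ k)) (hu₀ k)
    have hout : ∑ k ∈ (part G m)ᶜ, g k * u k ≤ (b - g m) * ∑ k ∈ (part G m)ᶜ, u k := by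
      rw [mul_sum]
      refine sum_le_sum fun k hk ↦ mul_le_mul_of_nonneg_right ?_ (hu₀ k)
      linarith [hg m k (by simpa using hk)]
    have hcompl := sum_add_sum_compl (part G m) u
    calc ∑ k, g k * u k
        = ∑ k ∈ part G m, g k * u k + ∑ k ∈ (part G m)ᶜ, g k * u k :=
          (sum_add_sum_compl _ _).symm
      _ ≤ g m * ∑ k ∈ part G m, u k + (b - g m) * ∑ k ∈ (part G m)ᶜ, u k := add_le_add hin hout
      _ = b - (2 * g m - b) * (1 - ∑ k ∈ part G m, u k) := by
          rw [eq_sub_of_add_eq' hcompl, hsum]; ring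
      _ ≤ b := sub_le_self b (mul_nonneg (by linarith) (by linarith [hpart m]))

variable [DecidableEq V]

theorem mem_edgePolytope_of_sum_part_le_one {u : V → ℝ} (hu₀ : ∀ i, 0 ≤ u i)
    (hsum : ∑ i, u i = 2) (hpart : ∀ i, ∑ j ∈ part G i, u j ≤ 1) : u ∈ edgePolytope G := by
  by_contra hu
  have hclosed : IsClosed (edgePolytope G) := (Set.toFinite _).isClosed_convexHull ℝ
  obtain ⟨F, b, hF, hb⟩ := geometric_hahn_banach_closed_point (convex_convexHull ℝ _) hclosed hu
  have hFu : ∑ k, F (Pi.single k 1) * u k = F u := by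
    conv_rhs => rw [pi_eq_sum_univ' u, map_sum]
    exact sum_congr rfl fun k _ ↦ by rw [map_smul, smul_eq_mul, mul_comm]
  refine hb.not_ge (hFu ▸ sum_mul_le_of_forall_adj hu₀ hsum hpart fun i j hij ↦ ?_)
  rw [← map_add]
  exact (hF _ (single_add_single_mem_edgePolytope hij)).le

theorem edgePolytope_eq_polyhedron (hG : G.IsCompleteMultipartite) :
    edgePolytope G = polyhedron (∑ i, LinearMap.proj i : (V → ℝ) →ₗ[ℝ] ℝ) 2
      (Sum.elim (fun i ↦ -LinearMap.proj i) (fun i ↦ ∑ j ∈ part G i, LinearMap.proj j))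
      (Sum.elim 0 1) := by
  refine (edgePolytope_subset (convex_polyhedron _ _ _ _) fun j k hjk ↦ ?_).antisymm fun u hu ↦ ?_
  · have hle_one (i : V) :
        ((if j ∈ part G i then 1 else 0) + if k ∈ part G i then 1 else 0 : ℝ) ≤ 1 := by
      have hnot : ¬ (j ∈ part G i ∧ k ∈ part G i) := fun ⟨hj, hk⟩ ↦
        hG.trans _ _ _ (fun h ↦ mem_part.1 hj h.symm) (mem_part.1 hk) hjk
      split_ifs <;> simp_all
    simp only [← sum_single_add_single] at hle_one
    refine ⟨?_, Sum.forall.2 ⟨fun i ↦ ?_, fun i ↦ by simpa using hle_one i⟩⟩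
    · simpa using (sum_single_add_single univ j k).trans (by norm_num)
    · have hnonneg : (0 : V → ℝ) ≤ Pi.single j 1 + Pi.single k 1 :=
        add_nonneg (Pi.single_nonneg.2 zero_le_one) (Pi.single_nonneg.2 zero_le_one)
      exact neg_nonpos.2 (hnonneg i)
  · simp only [polyhedron, Sum.forall] at hu
    exact mem_edgePolytope_of_sum_part_le_one (by simpa using hu.2.1) (by simpa using hu.1)
      (by simpa using hu.2.2)

theorem mem_edgePolytope_iff (hG : G.IsCompleteMultipartite) {u : V → ℝ} :
    u ∈ edgePolytope G ↔
      ∑ i, u i = 2 ∧ (∀ i, 0 ≤ u i) ∧ ∀ i, ∑ j ∈ part G i, u j ≤ 1 := by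
  simp [edgePolytope_eq_polyhedron hG, polyhedron]

theorem mem_intrinsicInterior_edgePolytope_iff (hG : G.IsCompleteMultipartite) {x : V → ℝ}
    (hsum : ∑ i, x i = 2) (hpos : ∀ i, 0 < x i) :
    x ∈ intrinsicInterior ℝ (edgePolytope G) ↔
      ∀ i, ∑ j ∈ part G i, x j ≤ 1 ∧
        (∑ j ∈ part G i, x j = 1 → ∀ z ∈ edgePolytope G, ∑ j ∈ part G i, z j = 1) := by
  rw [edgePolytope_eq_polyhedron hG, mem_intrinsicInterior_polyhedron,
    ← edgePolytope_eq_polyhedron hG, mem_edgePolytope_iff hG]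
  simp [hsum, (hpos _).le, (hpos _).ne', forall_and]

end EdgePolytope

section Walls

variable {V : Type*} {x y : V → ℝ}

/-- The points `x` and `y` lie on the same side of the wall `∑ i ∈ S, x i = 1`: both strictly below
it, both on it, or both strictly above it. -/
def SameSideOfWall (x y : V → ℝ) (S : Finset V) : Prop :=
  (∑ i ∈ S, x i < 1 ↔ ∑ i ∈ S, y i < 1) ∧ (∑ i ∈ S, x i = 1 ↔ ∑ i ∈ S, y i = 1)

theorem SameSideOfWall.symm {S : Finset V} (h : SameSideOfWall x y S) : SameSideOfWall y x S :=
  ⟨h.1.symm, h.2.symm⟩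

theorem sum_lt_one_of_card_le_one (hx : ∀ i, x i < 1) {S : Finset V} (hS : #S ≤ 1) :
    ∑ i ∈ S, x i < 1 := by
  rcases S.eq_empty_or_nonempty with rfl | hne
  · simp
  · obtain ⟨a, rfl⟩ := card_eq_one.1 (hS.antisymm hne.card_pos)
    simpa using hx a

/-- The complete bipartite graph with sides `S` and `Sᶜ`, whose edge polytope lies in the wall
`∑ i ∈ S, x i = 1`. -/
def completeBipartiteOn (S : Finset V) : SimpleGraph V :=
  (⊤ : SimpleGraph Prop).comap (· ∈ S)

theorem isCompleteMultipartite_completeBipartiteOn (S : Finset V) :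
    (completeBipartiteOn S).IsCompleteMultipartite :=
  isCompleteMultipartite_comap_top _

theorem sum_eq_one_of_mem_edgePolytope_completeBipartiteOn [DecidableEq V] {S : Finset V}
    {z : V → ℝ} (hz : z ∈ edgePolytope (completeBipartiteOn S)) : ∑ i ∈ S, z i = 1 := by
  have hK : Convex ℝ {v : V → ℝ | ∑ i ∈ S, v i = 1} := by
    simpa using convex_hyperplane (∑ i ∈ S, LinearMap.proj i : (V → ℝ) →ₗ[ℝ] ℝ).isLinear 1
  refine edgePolytope_subset hK (fun i j hij ↦ ?_) hz
  rw [Set.mem_ofPred_eq, sum_single_add_single]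
  by_cases hi : i ∈ S <;> by_cases hj : j ∈ S <;> simp_all [completeBipartiteOn]

/-- The graph in which distinct vertices are adjacent unless both lie in `S`. Its edge polytope
is the part of the hypersimplex on or below the wall `∑ i ∈ S, x i = 1` if `S` is nonempty. -/
def completeSplitGraph [DecidableEq V] (S : Finset V) : SimpleGraph V :=
  (⊤ : SimpleGraph (Option V)).comap fun i ↦ if i ∈ S then none else some i

theorem isCompleteMultipartite_completeSplitGraph [DecidableEq V] (S : Finset V) :
    (completeSplitGraph S).IsCompleteMultipartite :=
  isCompleteMultipartite_comap_top _

variable [Fintype V]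

theorem sameSideOfWall_of_card {S₀ : Finset V} (hx : ∑ i, x i = 2) (hx₁ : ∀ i, x i < 1)
    (hy : ∑ i, y i = 2) (hy₁ : ∀ i, y i < 1)
    (h : ∀ S : Finset V, 2 ≤ #S → #S ≤ Fintype.card V - 2 → SameSideOfWall x y S) :
    SameSideOfWall x y S₀ := by
  classical
  rcases le_or_gt #S₀ 1 with hsmall | hlarge
  · have hxS := sum_lt_one_of_card_le_one hx₁ hsmall
    have hyS := sum_lt_one_of_card_le_one hy₁ hsmall
    simp [SameSideOfWall, hxS, hyS, hxS.ne, hyS.ne]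
  rcases le_or_gt #S₀ᶜ 1 with hsmall | hlarge'
  · have hxS : 1 < ∑ i ∈ S₀, x i := by
      linarith [sum_lt_one_of_card_le_one hx₁ hsmall, sum_add_sum_compl S₀ x]
    have hyS : 1 < ∑ i ∈ S₀, y i := by
      linarith [sum_lt_one_of_card_le_one hy₁ hsmall, sum_add_sum_compl S₀ y]
    simp [SameSideOfWall, hxS.not_gt, hyS.not_gt, hxS.ne', hyS.ne']
  · exact h S₀ hlarge (by rw [card_compl] at hlarge'; lia)

variable [DecidableEq V]

theorem mem_intrinsicInterior_edgePolytope_congr {G : SimpleGraph V}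
    (hG : G.IsCompleteMultipartite) (hx : ∑ i, x i = 2) (hx₀ : ∀ i, 0 < x i)
    (hy : ∑ i, y i = 2) (hy₀ : ∀ i, 0 < y i) (h : ∀ S, SameSideOfWall x y S) :
    x ∈ intrinsicInterior ℝ (edgePolytope G) ↔ y ∈ intrinsicInterior ℝ (edgePolytope G) := by
  simp only [mem_intrinsicInterior_edgePolytope_iff hG hx hx₀,
    mem_intrinsicInterior_edgePolytope_iff hG hy hy₀, le_iff_lt_or_eq, (h _).1, (h _).2]

theorem part_completeBipartiteOn (S : Finset V) (i : V) :
    part (completeBipartiteOn S) i = if i ∈ S then S else Sᶜ := by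
  ext j
  by_cases hi : i ∈ S <;> simp [completeBipartiteOn, hi]

theorem mem_intrinsicInterior_edgePolytope_completeBipartiteOn_iff {S : Finset V}
    (hx : ∑ i, x i = 2) (hx₀ : ∀ i, 0 < x i) :
    x ∈ intrinsicInterior ℝ (edgePolytope (completeBipartiteOn S)) ↔ ∑ i ∈ S, x i = 1 := by
  refine ⟨fun h ↦ sum_eq_one_of_mem_edgePolytope_completeBipartiteOn (intrinsicInterior_subset h),
    fun hS ↦ ?_⟩
  have hpart {z : V → ℝ} (hz : ∑ i, z i = 2) (hzS : ∑ i ∈ S, z i = 1) (i : V) :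
      ∑ j ∈ part (completeBipartiteOn S) i, z j = 1 := by
    rw [part_completeBipartiteOn]
    split_ifs
    · exact hzS
    · linarith [sum_add_sum_compl S z]
  have hG := isCompleteMultipartite_completeBipartiteOn S
  refine (mem_intrinsicInterior_edgePolytope_iff hG hx hx₀).2 fun i ↦
    ⟨(hpart hx hS i).le, fun _ z hz ↦ hpart ((mem_edgePolytope_iff hG).1 hz).1
      (sum_eq_one_of_mem_edgePolytope_completeBipartiteOn hz) i⟩

theorem part_completeSplitGraph (S : Finset V) (i : V) :
    part (completeSplitGraph S) i = if i ∈ S then S else {i} := by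
  ext j
  by_cases hi : i ∈ S
  · by_cases hj : j ∈ S <;> simp [completeSplitGraph, hi, hj]
  · by_cases hj : j ∈ S
    · simp [completeSplitGraph, hi, hj, ne_of_mem_of_not_mem hj hi]
    · simp [completeSplitGraph, hi, hj, eq_comm]

theorem mem_intrinsicInterior_edgePolytope_completeSplitGraph_iff {S : Finset V}
    (hx : ∑ i, x i = 2) (hx₀ : ∀ i, 0 < x i) (hx₁ : ∀ i, x i < 1) :
    x ∈ intrinsicInterior ℝ (edgePolytope (completeSplitGraph S)) ↔ ∑ i ∈ S, x i < 1 := by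
  rw [mem_intrinsicInterior_edgePolytope_iff (isCompleteMultipartite_completeSplitGraph S) hx hx₀]
  refine ⟨fun h ↦ ?_, fun hS i ↦ ?_⟩
  · rcases S.eq_empty_or_nonempty with rfl | ⟨a, ha⟩
    · simp
    have ⟨hle, htight⟩ := h a
    simp only [part_completeSplitGraph, ha, if_true] at hle htight
    refine hle.lt_of_ne fun hS ↦ ?_
    have hcard : 1 < #Sᶜ := by
      by_contra! hsmall
      linarith [sum_lt_one_of_card_le_one hx₁ hsmall, sum_add_sum_compl S x]
    obtain ⟨b, hb, c, hc, hbc⟩ := one_lt_card.1 hcard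
    rw [mem_compl] at hb hc
    have hadj : (completeSplitGraph S).Adj b c := by simp [completeSplitGraph, hb, hc, hbc]
    have hone := htight hS _ (single_add_single_mem_edgePolytope hadj)
    rw [sum_single_add_single] at hone
    simp [hb, hc] at hone
  · have hlt : ∑ j ∈ part (completeSplitGraph S) i, x j < 1 := by
      rw [part_completeSplitGraph]
      split_ifs
      · exact hS
      · simpa using hx₁ i
    exact ⟨hlt.le, fun heq ↦ absurd heq hlt.ne⟩

end Walls

section Plucker

variable {n : ℕ} {A : Matrix (Fin n) (Fin 2) ℂ}

/-- The graph on the rows of `A` whose edges are the pairs with nonzero Plücker coordinate, which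
encodes the Plücker support. -/
def pluckerGraph (A : Matrix (Fin n) (Fin 2) ℂ) : SimpleGraph (Fin n) where
  Adj i j := plucker A i j ≠ 0
  symm := ⟨fun i j h ↦ by rwa [plucker, ← neg_sub, neg_ne_zero]⟩
  loopless := ⟨fun i ↦ by simp [plucker]⟩

theorem vertexOf_pair {i j : Fin n} (hij : i ≠ j) :
    vertexOf {i, j} = Pi.single i 1 + Pi.single j 1 := by
  ext k
  by_cases hi : k = i <;> by_cases hj : k = j <;> simp_all [vertexOf]

theorem admPolytope_pluckerSupport (A : Matrix (Fin n) (Fin 2) ℂ) :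
    admPolytope (pluckerSupport A) = edgePolytope (pluckerGraph A) := by
  refine congrArg (convexHull ℝ) (Set.ext fun v ↦ ⟨?_, ?_⟩)
  · rintro ⟨_, ⟨i, j, hij, rfl, hne⟩, rfl⟩
    exact ⟨(i, j), hne, (vertexOf_pair hij).symm⟩
  · rintro ⟨⟨i, j⟩, hadj : (pluckerGraph A).Adj i j, rfl⟩
    exact ⟨{i, j}, ⟨i, j, hadj.ne, rfl, hadj⟩, vertexOf_pair hadj.ne⟩

theorem isCompleteMultipartite_pluckerGraph (hA : ∀ i, A i ≠ 0) :
    (pluckerGraph A).IsCompleteMultipartite := by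
  refine ⟨fun i j k hij hjk ↦ ?_⟩
  simp only [pluckerGraph, plucker, not_not] at *
  have hj : A j 0 ≠ 0 ∨ A j 1 ≠ 0 := by
    by_contra! h
    exact hA j (funext (Fin.forall_fin_two.2 h))
  rcases hj with hj | hj <;> apply mul_left_cancel₀ hj
  · linear_combination A k 0 * hij + A i 0 * hjk
  · linear_combination A k 1 * hij + A i 1 * hjk

theorem row_ne_zero_of_mem_edgePolytope {x : Fin n → ℝ} (hx : ∀ i, x i ≠ 0)
    (hmem : x ∈ edgePolytope (pluckerGraph A)) (i : Fin n) : A i ≠ 0 := by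
  intro hi
  obtain ⟨j, hij⟩ := exists_adj_of_mem_edgePolytope hmem (hx i)
  exact hij (by simp [plucker, hi])

theorem rank_eq_two_of_plucker_ne_zero {i j : Fin n} (hij : plucker A i j ≠ 0) : A.rank = 2 := by
  have hdet : (A.submatrix ![i, j] (Equiv.refl (Fin 2))).det ≠ 0 := by
    rw [Matrix.det_fin_two]
    simpa [plucker, mul_comm] using hij
  refine A.rank_le_width.antisymm ?_
  have hrank := A.rank_submatrix_le ![i, j] (Equiv.refl (Fin 2))
  rwa [Matrix.rank_of_det_ne_zero hdet, Fintype.card_fin] at hrank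

theorem exists_pluckerGraph_eq {G : SimpleGraph (Fin n)} (hG : G.IsCompleteMultipartite) :
    ∃ A : Matrix (Fin n) (Fin 2) ℂ, pluckerGraph A = G := by
  let _ := hG.setoid
  -- Distinct slopes for distinct parts: the rows `(1, slope)` are parallel exactly within a part.
  obtain ⟨slope, hslope⟩ := Countable.exists_injective_nat (Quotient hG.setoid)
  refine ⟨fun i ↦ ![1, slope ⟦i⟧], ?_⟩
  ext i j
  have hcolor : slope ⟦i⟧ = slope ⟦j⟧ ↔ ¬ G.Adj i j := hslope.eq_iff.trans Quotient.eq
  rw [← not_iff_not, ← hcolor]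
  simp [pluckerGraph, plucker, sub_eq_zero, eq_comm (a := slope ⟦i⟧)]

theorem exists_isAdmissible_admPolytope_eq {G : SimpleGraph (Fin n)}
    (hG : G.IsCompleteMultipartite) {i j : Fin n} (hij : G.Adj i j) :
    ∃ σ, IsAdmissible σ ∧ admPolytope σ = edgePolytope G := by
  obtain ⟨A, rfl⟩ := exists_pluckerGraph_eq hG
  exact ⟨pluckerSupport A, ⟨A, rank_eq_two_of_plucker_ne_zero hij, rfl⟩,
    admPolytope_pluckerSupport A⟩

variable {x y : Fin n → ℝ}

theorem mem_intrinsicInterior_admPolytope_of_sameSideOfWall {σ : Set (Finset (Fin n))}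
    (hσ : IsAdmissible σ) (hx : ∑ i, x i = 2) (hx₀ : ∀ i, 0 < x i)
    (hy : ∑ i, y i = 2) (hy₀ : ∀ i, 0 < y i) (h : ∀ S, SameSideOfWall x y S)
    (hmem : x ∈ intrinsicInterior ℝ (admPolytope σ)) :
    y ∈ intrinsicInterior ℝ (admPolytope σ) := by
  obtain ⟨A, -, rfl⟩ := hσ
  rw [admPolytope_pluckerSupport] at hmem ⊢
  have hA : ∀ i, A i ≠ 0 :=
    row_ne_zero_of_mem_edgePolytope (fun i ↦ (hx₀ i).ne') (intrinsicInterior_subset hmem)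
  exact (mem_intrinsicInterior_edgePolytope_congr (isCompleteMultipartite_pluckerGraph hA)
    hx hx₀ hy hy₀ h).1 hmem

theorem sameSideOfWall_of_forall_isAdmissible (hx : ∑ i, x i = 2) (hx' : ∀ i, 0 < x i ∧ x i < 1)
    (hy : ∑ i, y i = 2) (hy' : ∀ i, 0 < y i ∧ y i < 1)
    (h : ∀ σ : Set (Finset (Fin n)), IsAdmissible σ →
      (x ∈ intrinsicInterior ℝ (admPolytope σ) ↔ y ∈ intrinsicInterior ℝ (admPolytope σ)))
    {S : Finset (Fin n)} {a b : Fin n} (ha : a ∈ S) (hb : b ∉ S) : SameSideOfWall x y S := by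
  have hgraph {G : SimpleGraph (Fin n)} (hG : G.IsCompleteMultipartite) (hab : G.Adj a b) :
      x ∈ intrinsicInterior ℝ (edgePolytope G) ↔ y ∈ intrinsicInterior ℝ (edgePolytope G) := by
    obtain ⟨σ, hσ, hσG⟩ := exists_isAdmissible_admPolytope_eq hG hab
    exact hσG ▸ h σ hσ
  constructor
  · have hsplit := hgraph (isCompleteMultipartite_completeSplitGraph S)
      (by simp [completeSplitGraph, ha, hb])
    rwa [mem_intrinsicInterior_edgePolytope_completeSplitGraph_iff hx (hx' · |>.1) (hx' · |>.2),
      mem_intrinsicInterior_edgePolytope_completeSplitGraph_iff hy (hy' · |>.1) (hy' · |>.2)]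
      at hsplit
  · have hbipartite := hgraph (isCompleteMultipartite_completeBipartiteOn S)
      (by simp [completeBipartiteOn, ha, hb])
    rwa [mem_intrinsicInterior_edgePolytope_completeBipartiteOn_iff hx (hx' · |>.1),
      mem_intrinsicInterior_edgePolytope_completeBipartiteOn_iff hy (hy' · |>.1)] at hbipartite

end Plucker

/-- two interior points of Δ_{n,2} lie in the relative
(intrinsic) interiors of exactly the same admissible polytopes of G_{n,2} iff
they lie on the same side (strictly below, on, or strictly above) of every
hyperplane ∑_{i∈S} x_i = 1 with 2 ≤ |S| ≤ n−2. -/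
theorem stmt15 (n : ℕ) (hn : 4 ≤ n) (x y : Fin n → ℝ)
    (hx : (∑ i, x i) = 2 ∧ ∀ i, 0 < x i ∧ x i < 1)
    (hy : (∑ i, y i) = 2 ∧ ∀ i, 0 < y i ∧ y i < 1) :
    (∀ σ : Set (Finset (Fin n)), IsAdmissible σ →
      (x ∈ intrinsicInterior ℝ (admPolytope σ) ↔
       y ∈ intrinsicInterior ℝ (admPolytope σ))) ↔
    (∀ S : Finset (Fin n), 2 ≤ S.card → S.card ≤ n - 2 →
      (((∑ i ∈ S, x i) < 1 ↔ (∑ i ∈ S, y i) < 1) ∧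
       ((∑ i ∈ S, x i) = 1 ↔ (∑ i ∈ S, y i) = 1))) := by
  obtain ⟨hxsum, hx⟩ := hx
  obtain ⟨hysum, hy⟩ := hy
  constructor
  · intro h S hS hSn
    obtain ⟨a, ha⟩ : S.Nonempty := card_pos.1 (by lia)
    obtain ⟨b, hb⟩ : Sᶜ.Nonempty := card_pos.1 (by rw [card_compl, Fintype.card_fin]; lia)
    exact sameSideOfWall_of_forall_isAdmissible hxsum hx hysum hy h ha (mem_compl.1 hb)
  · intro h σ hσ
    have hside (S : Finset (Fin n)) : SameSideOfWall x y S :=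
      sameSideOfWall_of_card hxsum (hx · |>.2) hysum (hy · |>.2)
        (by rwa [Fintype.card_fin])
    exact ⟨mem_intrinsicInterior_admPolytope_of_sameSideOfWall hσ hxsum (hx · |>.1)
        hysum (hy · |>.1) hside,
      mem_intrinsicInterior_admPolytope_of_sameSideOfWall hσ hysum (hy · |>.1)
        hxsum (hx · |>.1) (hside · |>.symm)⟩
end
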